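/- Fix d ≥ 1, constants a > 0, γ > 1, pressure p(s) = a s^γ and potential F(s) = a s^γ/(γ−1). Let (r, U) be a smooth, ℤ^d-periodic-in-x solution on [0,T] × ℝ^d of the compressible Euler equations ∂t r + div(rU) = 0, ∂t(rU) + div(r U ⊗ U) + ∇p(r) = 0, with r bounded below by a positive constant. For each ε ∈ (0,1], let (ρ_ε, u_ε) be a smooth, ℤ^d-periodic-in-x solution on [0,T] × ℝ^d of the compressible Navier–Stokes system ∂t ρ + div(ρu) = 0, ∂t(ρu) + div(ρ u ⊗ u) + ∇p(ρ) − 2ε div(ρ D(u)) = 0, with ρ_ε > 0, and with the same initial data: ρ_ε(0,·) = r(0,·) and u_ε(0,·) = U(0,·). Then sup_{t ∈ [0,T]} ∫_{[0,1]^d} [ (1/2) ρ_ε |u_ε − U|² + F(ρ_ε) − F(r) − F′(r)(ρ_ε − r) ](t,x) dx → 0 as ε → 0. -/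

import Mathlib

open Real MeasureTheory Set Filter

noncomputable section

variable {d : ℕ}

/-- `i`-th partial derivative of a scalar function on `ℝᵈ`. -/
def sder (i : Fin d) (f : (Fin d → ℝ) → ℝ) (x : Fin d → ℝ) : ℝ :=
  fderiv ℝ f x (Pi.single i 1)

/-- Jacobian matrix of a vector field on `ℝᵈ`: `(∇u)_{ij} = ∂_j u_i`. -/
def sjac (u : (Fin d → ℝ) → Fin d → ℝ) (x : Fin d → ℝ) : Fin d → Fin d → ℝ :=
  fun i j => sder j (fun y => u y i) x

/-- Symmetric gradient `D(u) = (∇u + (∇u)ᵀ)/2` of a vector field on `ℝᵈ`. -/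
def sD (u : (Fin d → ℝ) → Fin d → ℝ) (x : Fin d → ℝ) : Fin d → Fin d → ℝ :=
  fun i j => (sjac u x i j + sjac u x j i) / 2

/-- Antisymmetric gradient `A(u) = (∇u - (∇u)ᵀ)/2` of a vector field on `ℝᵈ`. -/
def sA (u : (Fin d → ℝ) → Fin d → ℝ) (x : Fin d → ℝ) : Fin d → Fin d → ℝ :=
  fun i j => (sjac u x i j - sjac u x j i) / 2

/-- Time derivative `∂ₜ f` of a scalar function on `ℝ × ℝᵈ`. -/
def tder (f : ℝ × (Fin d → ℝ) → ℝ) (z : ℝ × (Fin d → ℝ)) : ℝ :=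
  fderiv ℝ f z (1, 0)

/-- `i`-th spatial partial derivative `∂ᵢ f` of a scalar function on `ℝ × ℝᵈ`. -/
def xder (i : Fin d) (f : ℝ × (Fin d → ℝ) → ℝ) (z : ℝ × (Fin d → ℝ)) : ℝ :=
  fderiv ℝ f z (0, Pi.single i 1)

/-- Spatial divergence of a (time-dependent) vector field. -/
def xdiv (u : ℝ × (Fin d → ℝ) → Fin d → ℝ) (z : ℝ × (Fin d → ℝ)) : ℝ :=
  ∑ i, xder i (fun y => u y i) z

/-- Spatial Jacobian matrix `(∇u)_{ij} = ∂_j u_i` of a (time-dependent) vector field. -/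
def xjac (u : ℝ × (Fin d → ℝ) → Fin d → ℝ) (z : ℝ × (Fin d → ℝ)) : Fin d → Fin d → ℝ :=
  fun i j => xder j (fun y => u y i) z

/-- Symmetric gradient `D(u) = (∇u + (∇u)ᵀ)/2` of a (time-dependent) vector field. -/
def xD (u : ℝ × (Fin d → ℝ) → Fin d → ℝ) (z : ℝ × (Fin d → ℝ)) : Fin d → Fin d → ℝ :=
  fun i j => (xjac u z i j + xjac u z j i) / 2

/-- Antisymmetric gradient `A(u) = (∇u - (∇u)ᵀ)/2` of a (time-dependent) vector field. -/
def xA (u : ℝ × (Fin d → ℝ) → Fin d → ℝ) (z : ℝ × (Fin d → ℝ)) : Fin d → Fin d → ℝ :=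
  fun i j => (xjac u z i j - xjac u z j i) / 2

/-- Divergence of a matrix field: `(div M)ᵢ = ∑ⱼ ∂ⱼ M_{ij}`. -/
def mdiv (M : ℝ × (Fin d → ℝ) → Fin d → Fin d → ℝ) (z : ℝ × (Fin d → ℝ)) : Fin d → ℝ :=
  fun i => ∑ j, xder j (fun y => M y i j) z

/-- Euclidean inner product on `ℝᵈ`. -/
def dotv (a b : Fin d → ℝ) : ℝ := ∑ i, a i * b i

/-- Frobenius inner product of `d × d` matrices. -/
def frob (M N : Fin d → Fin d → ℝ) : ℝ := ∑ i, ∑ j, M i j * N i j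

/-- The unit box `[0,1]ᵈ`. -/
def box (d : ℕ) : Set (Fin d → ℝ) := Set.univ.pi fun _ => Set.Icc (0 : ℝ) 1

/-- `ℤᵈ`-periodicity in the space variable for scalar functions on `ℝ × ℝᵈ`. -/
def PeriodicX (f : ℝ × (Fin d → ℝ) → ℝ) : Prop :=
  ∀ (t : ℝ) (x : Fin d → ℝ) (k : Fin d → ℤ), f (t, x + fun i => (k i : ℝ)) = f (t, x)

/-- Mass conservation equation `∂ₜ ρ + div (ρ u) = 0` at the point `z`. -/
def MassEq (ρ : ℝ × (Fin d → ℝ) → ℝ) (u : ℝ × (Fin d → ℝ) → Fin d → ℝ)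
    (z : ℝ × (Fin d → ℝ)) : Prop :=
  tder ρ z + xdiv (fun y j => ρ y * u y j) z = 0

/-- Momentum equation `∂ₜ(ρu) + div(ρ u ⊗ u) + ∇(a ρ^γ) - 2 μ div(ρ D(u)) = 0`
at the point `z`. -/
def MomEq (μ a γ : ℝ) (ρ : ℝ × (Fin d → ℝ) → ℝ) (u : ℝ × (Fin d → ℝ) → Fin d → ℝ)
    (z : ℝ × (Fin d → ℝ)) : Prop :=
  ∀ i, tder (fun y => ρ y * u y i) z
      + mdiv (fun y i j => ρ y * u y i * u y j) z i
      + xder i (fun y => a * ρ y ^ γ) z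
      - 2 * μ * mdiv (fun y i j => ρ y * xD u y i j) z i = 0

/-- Compressible Euler momentum equation `∂ₜ(ρu) + div(ρ u ⊗ u) + ∇(a ρ^γ) = 0`
at the point `z`. -/
def EulerMomEq (a γ : ℝ) (ρ : ℝ × (Fin d → ℝ) → ℝ) (u : ℝ × (Fin d → ℝ) → Fin d → ℝ)
    (z : ℝ × (Fin d → ℝ)) : Prop :=
  ∀ i, tder (fun y => ρ y * u y i) z
      + mdiv (fun y i j => ρ y * u y i * u y j) z i
      + xder i (fun y => a * ρ y ^ γ) z = 0

lemma isCompact_box (d : ℕ) : IsCompact (box d) := isCompact_univ_pi fun _ => isCompact_Icc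

lemma box_eq_Icc (d : ℕ) : box d = Set.Icc (0 : Fin d → ℝ) 1 := by
  ext x; simp [box, Set.mem_Icc, Pi.le_def]

lemma contDiff_dir {f : ℝ × (Fin d → ℝ) → ℝ} {n : ℕ∞} (hf : ContDiff ℝ ((n + 1 : ℕ∞) : WithTop ℕ∞) f)
    (v : ℝ × (Fin d → ℝ)) : ContDiff ℝ n (fun z => fderiv ℝ f z v) :=
  (hf.fderiv_right (by simp)).clm_apply contDiff_const

lemma continuous_dir {f : ℝ × (Fin d → ℝ) → ℝ} (hf : ContDiff ℝ 1 f)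
    (v : ℝ × (Fin d → ℝ)) : Continuous (fun z => fderiv ℝ f z v) :=
  (hf.continuous_fderiv one_ne_zero).clm_apply continuous_const

lemma intOn_slice {f : ℝ × (Fin d → ℝ) → ℝ} (hf : Continuous f) (t : ℝ) :
    IntegrableOn (fun x => f (t, x)) (box d) :=
  (Continuous.continuousOn (by fun_prop)).integrableOn_compact (isCompact_box d)

lemma hasDerivAt_int {f : ℝ × (Fin d → ℝ) → ℝ} (hf : ContDiff ℝ 1 f) (t : ℝ) :
    HasDerivAt (fun s => ∫ x in box d, f (s, x)) (∫ x in box d, tder f (t, x)) t := by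
  have hc : Continuous (tder f) := continuous_dir hf (1, 0)
  obtain ⟨B, hB⟩ := ((isCompact_Icc (a := t - 1) (b := t + 1)).prod
    (isCompact_box d)).exists_bound_of_continuousOn hc.continuousOn
  have hfc := hf.continuous
  refine (hasDerivAt_integral_of_dominated_loc_of_deriv_le (μ := volume.restrict (box d))
    (F := fun s x => f (s, x)) (F' := fun s x => tder f (s, x)) (bound := fun _ => B)
    (s := Set.Icc (t - 1) (t + 1)) (Icc_mem_nhds (by linarith) (by linarith)) ?_ ?_ ?_ ?_ ?_ ?_).2
  · exact Eventually.of_forall fun s => (intOn_slice hfc s).aestronglyMeasurable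
  · exact intOn_slice hfc t
  · exact (intOn_slice hc t).aestronglyMeasurable
  · filter_upwards [ae_restrict_mem (isCompact_box d).measurableSet] with x hx s hs
    exact hB (s, x) ⟨hs, hx⟩
  · exact (continuous_const.continuousOn).integrableOn_compact (isCompact_box d)
  · refine Eventually.of_forall fun x s _ => ?_
    have h1 : HasFDerivAt f (fderiv ℝ f (s, x)) (s, x) :=
      (hf.differentiable one_ne_zero (s, x)).hasFDerivAt
    have h2 : HasDerivAt (fun s : ℝ => (s, x)) ((1 : ℝ), (0 : Fin d → ℝ)) s :=
      (hasDerivAt_id s).prodMk (hasDerivAt_const s x)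
    exact h1.comp_hasDerivAt s h2

lemma int_xdiv_zero {G : ℝ × (Fin d → ℝ) → Fin d → ℝ} (hd : 1 ≤ d)
    (hG : ∀ i, ContDiff ℝ 1 (fun z => G z i)) (hper : ∀ i, PeriodicX (fun z => G z i)) (t : ℝ) :
    ∫ x in box d, xdiv G (t, x) = 0 := by
  obtain ⟨n, rfl⟩ : ∃ n, d = n + 1 := ⟨d - 1, by omega⟩
  have hG' : ContDiff ℝ 1 G := contDiff_pi.2 hG
  have hder : ∀ x, HasFDerivAt (fun x : Fin (n+1) → ℝ => G (t, x))
      ((fderiv ℝ G (t, x)).comp (ContinuousLinearMap.inr ℝ ℝ (Fin (n+1) → ℝ))) x := fun x =>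
    (hG'.differentiable one_ne_zero (t, x)).hasFDerivAt.comp x (hasFDerivAt_prodMk_right t x)
  have hx : ∀ z, xdiv G z = ∑ i, (fderiv ℝ G z) (0, Pi.single i 1) i := by
    intro z
    refine Finset.sum_congr rfl fun i _ => ?_
    have := fderiv_pi (φ := fun i z => G z i) (x := z) (𝕜 := ℝ) (fun i => (hG i).differentiable one_ne_zero z)
    unfold xder
    rw [show G = fun z i => G z i from rfl, this]
    rfl
  have hcont : Continuous (xdiv G) := by
    unfold xdiv
    exact continuous_finsetSum _ fun i _ => continuous_dir (hG i) _
  have key := integral_divergence_of_hasFDerivAt_off_countable (E := ℝ) (0 : Fin (n+1) → ℝ) 1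
    zero_le_one (fun x => G (t, x)) _ ∅ countable_empty
    (by have := hG'.continuous; fun_prop) (fun x _ => hder x) (by
      have := intOn_slice hcont t
      rw [box_eq_Icc] at this
      simpa [hx] using this)
  rw [box_eq_Icc]
  simp only [hx]
  refine Eq.trans (by simp) (key.trans ?_)
  refine Finset.sum_eq_zero fun i _ => ?_
  rw [sub_eq_zero]
  congr 1
  ext x
  have := hper i t (i.insertNth 0 x) (Pi.single i 1)
  simp only at this
  rw [Pi.zero_apply, Pi.one_apply, ← this]
  congr 2
  ext j
  refine Fin.succAboveCases i ?_ (fun k => ?_) j <;> simp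

lemma gronwall_simple {E E' : ℝ → ℝ} {K M T : ℝ} (hK : 0 ≤ K) (hM : 0 ≤ M)
    (hE : ∀ t, HasDerivAt E (E' t) t) (h0 : E 0 = 0)
    (hle : ∀ t ∈ Set.Icc 0 T, E' t ≤ K * E t + M) (t : ℝ) (ht : t ∈ Set.Icc 0 T) :
    E t ≤ M * T * Real.exp (K * T) := by
  have hg : ∀ s, HasDerivAt (fun s => E s * Real.exp (-(K * s)) - M * s)
      (E' s * Real.exp (-(K * s)) + E s * (Real.exp (-(K * s)) * -K) - M) s := by
    intro s
    have h1 : HasDerivAt (fun s : ℝ => -(K * s)) (-K) s := by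
      simpa using ((hasDerivAt_id s).const_mul (-K))
    have h2 : HasDerivAt (fun s : ℝ => M * s) M s := by
      simpa using ((hasDerivAt_id s).const_mul M)
    exact ((hE s).mul h1.exp).sub h2
  have hanti : AntitoneOn (fun s => E s * Real.exp (-(K * s)) - M * s) (Set.Icc 0 T) := by
    refine antitoneOn_of_deriv_nonpos (convex_Icc 0 T)
      (fun s _ => (hg s).continuousAt.continuousWithinAt)
      (fun s _ => (hg s).differentiableAt.differentiableWithinAt) (fun s hs => ?_)
    rw [interior_Icc] at hs
    rw [(hg s).deriv]
    have h1 := hle s ⟨hs.1.le, hs.2.le⟩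
    have h2 : Real.exp (-(K * s)) ≤ 1 := Real.exp_le_one_iff.2 (by nlinarith [hs.1])
    have h3 := Real.exp_pos (-(K * s))
    nlinarith [mul_nonneg (sub_nonneg.2 h1) h3.le, mul_nonneg hM (sub_nonneg.2 h2)]
  have hT : 0 ≤ T := ht.1.trans ht.2
  have h := hanti ⟨le_rfl, hT⟩ ht ht.1
  simp only [h0, zero_mul, mul_zero, sub_zero] at h
  have h4 : E t * Real.exp (-(K * t)) ≤ M * T := by nlinarith [mul_le_mul_of_nonneg_left ht.2 hM]
  have h5 : E t = E t * Real.exp (-(K * t)) * Real.exp (K * t) := by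
    rw [mul_assoc, ← Real.exp_add]; simp
  rw [h5]
  have h6 : Real.exp (K * t) ≤ Real.exp (K * T) :=
    Real.exp_le_exp.2 (mul_le_mul_of_nonneg_left ht.2 hK)
  calc _ ≤ M * T * Real.exp (K * t) := mul_le_mul_of_nonneg_right h4 (Real.exp_pos _).le
    _ ≤ _ := mul_le_mul_of_nonneg_left h6 (mul_nonneg hM hT)

lemma F_rel_nonneg {a γ s q : ℝ} (ha : 0 < a) (hγ : 1 < γ) (hs : 0 < s) (hq : 0 < q) :
    0 ≤ a * s ^ γ / (γ - 1) - a * q ^ γ / (γ - 1) - a * γ * q ^ (γ - 1) / (γ - 1) * (s - q) := by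
  have h := one_add_mul_self_le_rpow_one_add (s := s / q - 1) (by have := div_pos hs hq; linarith)
    hγ.le
  rw [add_sub_cancel, Real.div_rpow hs.le hq.le] at h
  have hqg : 0 < q ^ γ := Real.rpow_pos_of_pos hq γ
  have h1 : q ^ γ = q ^ (γ - 1) * q := by
    rw [← Real.rpow_add_one hq.ne']; simp
  have h2 : q ^ γ + γ * q ^ (γ - 1) * (s - q) ≤ s ^ γ := by
    rw [le_div_iff₀ hqg] at h
    refine le_trans (le_of_eq ?_) h
    rw [h1]; field_simp
  have h3 : a * s ^ γ / (γ - 1) - a * q ^ γ / (γ - 1) - a * γ * q ^ (γ - 1) / (γ - 1) * (s - q)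
      = a / (γ - 1) * (s ^ γ - (q ^ γ + γ * q ^ (γ - 1) * (s - q))) := by ring
  rw [h3]
  exact mul_nonneg (div_nonneg ha.le (by linarith)) (by linarith)

/-- pure algebra behind the relative energy identity -/
lemma rel_energy_alg {d : ℕ} (R q Rt qt ε F1 f1 F2 f2 P pq Q : ℝ) (Rx qx v V vt Vt w : Fin d → ℝ)
    (vx Vx S Sx : Fin d → Fin d → ℝ) (hw : ∀ i, w i = v i - V i)
    (hmass : Rt + ∑ j, (R * vx j j + v j * Rx j) = 0)
    (hqmass : qt + ∑ j, (q * Vx j j + V j * qx j) = 0)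
    (hmom : ∀ i, R * (vt i + ∑ j, v j * vx i j) + R * F2 * Rx i = 2 * ε * ∑ j, Sx i j)
    (hE : ∀ i, Vt i + ∑ j, V j * Vx i j + f2 * qx i = 0) :
    (1 / 2) * Rt * Q + R * ∑ i, w i * (vt i - Vt i) + (F1 - f1) * Rt - f2 * qt * (R - q)
    = ∑ j, (-((1 / 2) * Q * Rx j + R * (∑ i, w i * (vx i j - Vx i j)) + (F1 - f1) * Rx j
          + R * (F2 * Rx j - f2 * qx j)) * v j - ((1 / 2) * R * Q + (F1 - f1) * R) * vx j j
        + Vx j j * (P - pq) + V j * (R * F2 * Rx j - q * f2 * qx j)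
        + 2 * ε * ∑ i, (Sx i j * w i + S i j * (vx i j - Vx i j)))
      - (∑ i, ∑ j, (R * w i * w j * Vx i j + 2 * ε * (S i j * (vx i j - Vx i j))))
      - (P - pq - q * f2 * (R - q)) * ∑ j, Vx j j := by
  have h1 : (1 / 2) * Rt * Q + (F1 - f1) * Rt - f2 * qt * (R - q)
      = ∑ j, (-((1 / 2) * Q + (F1 - f1)) * (R * vx j j + v j * Rx j)
          + f2 * (R - q) * (q * Vx j j + V j * qx j)) := by
    rw [Finset.sum_add_distrib, ← Finset.mul_sum, ← Finset.mul_sum]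
    linear_combination ((1 / 2) * Q + (F1 - f1)) * hmass - f2 * (R - q) * hqmass
  have h2 : R * ∑ i, w i * (vt i - Vt i)
      = ∑ i, w i * (-R * F2 * Rx i + R * f2 * qx i)
        + ∑ i, ∑ j, (w i * (2 * ε) * Sx i j - w i * R * (v j * vx i j)
          + w i * R * (V j * Vx i j)) := by
    rw [Finset.mul_sum, ← Finset.sum_add_distrib]
    refine Finset.sum_congr rfl fun i _ => ?_
    rw [Finset.sum_add_distrib, Finset.sum_sub_distrib, ← Finset.mul_sum, ← Finset.mul_sum,
      ← Finset.mul_sum]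
    linear_combination w i * hmom i - w i * R * hE i
  have h3 : ∑ j, (-((1 / 2) * Q * Rx j + R * (∑ i, w i * (vx i j - Vx i j)) + (F1 - f1) * Rx j
          + R * (F2 * Rx j - f2 * qx j)) * v j - ((1 / 2) * R * Q + (F1 - f1) * R) * vx j j
        + Vx j j * (P - pq) + V j * (R * F2 * Rx j - q * f2 * qx j)
        + 2 * ε * ∑ i, (Sx i j * w i + S i j * (vx i j - Vx i j)))
      = ∑ j, (-((1 / 2) * Q * Rx j + (F1 - f1) * Rx j
          + R * (F2 * Rx j - f2 * qx j)) * v j - ((1 / 2) * R * Q + (F1 - f1) * R) * vx j j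
        + Vx j j * (P - pq) + V j * (R * F2 * Rx j - q * f2 * qx j))
        + ∑ i, ∑ j, (-R * v j * (w i * (vx i j - Vx i j))
          + 2 * ε * (Sx i j * w i + S i j * (vx i j - Vx i j))) := by
    rw [Finset.sum_comm (s := Finset.univ) (t := Finset.univ)
      (f := fun i j => (-R * v j * (w i * (vx i j - Vx i j))
          + 2 * ε * (Sx i j * w i + S i j * (vx i j - Vx i j)))), ← Finset.sum_add_distrib]
    refine Finset.sum_congr rfl fun j _ => ?_
    have e1 : ∑ i, (-R * v j * (w i * (vx i j - Vx i j))
          + 2 * ε * (Sx i j * w i + S i j * (vx i j - Vx i j)))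
        = -R * v j * (∑ i, w i * (vx i j - Vx i j))
          + 2 * ε * ∑ i, (Sx i j * w i + S i j * (vx i j - Vx i j)) := by
      rw [Finset.mul_sum, Finset.mul_sum, ← Finset.sum_add_distrib]
    rw [e1]
    ring
  have h4 : ∑ i, ∑ j, (w i * (2 * ε) * Sx i j - w i * R * (v j * vx i j)
          + w i * R * (V j * Vx i j))
      = ∑ i, ∑ j, (-R * v j * (w i * (vx i j - Vx i j))
          + 2 * ε * (Sx i j * w i + S i j * (vx i j - Vx i j)))
        - ∑ i, ∑ j, (R * w i * w j * Vx i j + 2 * ε * (S i j * (vx i j - Vx i j))) := by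
    rw [← Finset.sum_sub_distrib]
    refine Finset.sum_congr rfl fun i _ => ?_
    rw [← Finset.sum_sub_distrib]
    refine Finset.sum_congr rfl fun j _ => ?_
    rw [hw j]; ring
  have h5 : ∑ j, (-((1 / 2) * Q + (F1 - f1)) * (R * vx j j + v j * Rx j)
          + f2 * (R - q) * (q * Vx j j + V j * qx j))
      + ∑ i, w i * (-R * F2 * Rx i + R * f2 * qx i)
      = ∑ j, (-((1 / 2) * Q * Rx j + (F1 - f1) * Rx j
          + R * (F2 * Rx j - f2 * qx j)) * v j - ((1 / 2) * R * Q + (F1 - f1) * R) * vx j j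
        + Vx j j * (P - pq) + V j * (R * F2 * Rx j - q * f2 * qx j))
        - (P - pq - q * f2 * (R - q)) * ∑ j, Vx j j := by
    rw [Finset.mul_sum, ← Finset.sum_sub_distrib, ← Finset.sum_add_distrib]
    refine Finset.sum_congr rfl fun j _ => ?_
    rw [hw j]; ring
  rw [h3]
  linear_combination h1 + h2 + h4 + h5

/-- `f` is differentiable at `z` with derivative `f'` in direction `v`. -/
def HD (f : ℝ × (Fin d → ℝ) → ℝ) (f' : ℝ) (z v : ℝ × (Fin d → ℝ)) : Prop :=
  DifferentiableAt ℝ f z ∧ fderiv ℝ f z v = f'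

section HD
variable {f g : ℝ × (Fin d → ℝ) → ℝ} {f' g' : ℝ} {z v : ℝ × (Fin d → ℝ)}

lemma HD.mul (hf : HD f f' z v) (hg : HD g g' z v) :
    HD (fun y => f y * g y) (f z * g' + g z * f') z v := by
  refine ⟨hf.1.mul hg.1, ?_⟩
  rw [fderiv_fun_mul hf.1 hg.1, ← hf.2, ← hg.2]; simp

lemma HD.add (hf : HD f f' z v) (hg : HD g g' z v) :
    HD (fun y => f y + g y) (f' + g') z v := by
  refine ⟨hf.1.add hg.1, ?_⟩
  rw [fderiv_fun_add hf.1 hg.1, ← hf.2, ← hg.2]; simp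

lemma HD.sub (hf : HD f f' z v) (hg : HD g g' z v) :
    HD (fun y => f y - g y) (f' - g') z v := by
  refine ⟨hf.1.sub hg.1, ?_⟩
  rw [fderiv_fun_sub hf.1 hg.1, ← hf.2, ← hg.2]; simp

lemma HD.cmul (c : ℝ) (hf : HD f f' z v) : HD (fun y => c * f y) (c * f') z v := by
  refine ⟨hf.1.const_mul c, ?_⟩
  rw [fderiv_const_mul hf.1, ← hf.2]; simp

lemma HD.sum {φ : Fin d → ℝ × (Fin d → ℝ) → ℝ} {φ' : Fin d → ℝ} (h : ∀ i, HD (φ i) (φ' i) z v) :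
    HD (fun y => ∑ i, φ i y) (∑ i, φ' i) z v := by
  refine ⟨DifferentiableAt.fun_sum fun i _ => (h i).1, ?_⟩
  rw [fderiv_fun_sum fun i _ => (h i).1]
  simp [fun i => (h i).2]

lemma HD.rpow (p : ℝ) (hf : HD f f' z v) (h0 : 0 < f z) :
    HD (fun y => f y ^ p) (p * f z ^ (p - 1) * f') z v := by
  have := (hf.1.hasFDerivAt.rpow_const (p := p) (Or.inl h0.ne'))
  refine ⟨this.differentiableAt, ?_⟩
  rw [this.fderiv, ← hf.2]; simp

lemma HD.of (hf : DifferentiableAt ℝ f z) (v) : HD f (fderiv ℝ f z v) z v := ⟨hf, rfl⟩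

lemma HD.congr (hf : HD f f' z v) (hg : g = f) (h : f' = g') : HD g g' z v := by
  subst h; subst hg; exact hf
end HD

lemma mass_nc {ρ : ℝ × (Fin d → ℝ) → ℝ} {u : ℝ × (Fin d → ℝ) → Fin d → ℝ} {z : ℝ × (Fin d → ℝ)}
    (hρ : Differentiable ℝ ρ) (hu : ∀ i, Differentiable ℝ fun y => u y i) (h : MassEq ρ u z) :
    tder ρ z + ∑ j, (ρ z * xder j (fun y => u y j) z + u z j * xder j ρ z) = 0 := by
  rw [← h]
  congr 1
  refine Finset.sum_congr rfl fun j _ => ?_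
  exact ((HD.of (hρ z) _).mul (HD.of (hu j z) _)).2.symm

lemma rpow_step {s : ℝ} (hs : 0 < s) (p : ℝ) : s ^ p = s * s ^ (p - 1) := by
  rw [mul_comm, ← Real.rpow_add_one hs.ne']; simp

lemma mom_nc {ε a γ : ℝ} {ρ : ℝ × (Fin d → ℝ) → ℝ} {u : ℝ × (Fin d → ℝ) → Fin d → ℝ}
    {z : ℝ × (Fin d → ℝ)}
    (hρ : Differentiable ℝ ρ) (hu : ∀ i, Differentiable ℝ fun y => u y i) (hpos : 0 < ρ z)
    (h : MassEq ρ u z) (hm : MomEq ε a γ ρ u z) (i : Fin d) :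
    ρ z * (tder (fun y => u y i) z + ∑ j, u z j * xder j (fun y => u y i) z)
      + ρ z * (a * γ * ρ z ^ (γ - 2)) * xder i ρ z
      = 2 * ε * ∑ j, xder j (fun y => ρ y * xD u y i j) z := by
  have h1 := mass_nc hρ hu h
  have h2 := hm i
  have e1 : tder (fun y => ρ y * u y i) z = ρ z * tder (fun y => u y i) z + u z i * tder ρ z :=
    ((HD.of (hρ z) _).mul (HD.of (hu i z) _)).2
  have e2 : mdiv (fun y i j => ρ y * u y i * u y j) z i
      = u z i * (∑ j, (ρ z * xder j (fun y => u y j) z + u z j * xder j ρ z))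
        + ρ z * ∑ j, u z j * xder j (fun y => u y i) z := by
    rw [Finset.mul_sum, Finset.mul_sum, ← Finset.sum_add_distrib]
    refine Finset.sum_congr rfl fun j _ => ?_
    refine (((HD.of (hρ z) _).mul (HD.of (hu i z) _)).mul (HD.of (hu j z) _)).2.trans ?_
    simp only [xder]
    ring
  have e3 : xder i (fun y => a * ρ y ^ γ) z = a * (γ * ρ z ^ (γ - 1) * xder i ρ z) :=
    (((HD.of (hρ z) _).rpow γ hpos).cmul a).2
  rw [e1, e2, e3] at h2
  have e4 : ρ z ^ (γ - 1) = ρ z * ρ z ^ (γ - 2) := by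
    rw [rpow_step hpos]; congr 2; ring
  rw [e4] at h2
  have e5 : mdiv (fun y i j => ρ y * xD u y i j) z i
    = ∑ j, xder j (fun y => ρ y * xD u y i j) z := rfl
  rw [e5] at h2
  linear_combination h2 - u z i * h1

/-- relative energy density -/
def relE (a γ : ℝ) (ρ : ℝ × (Fin d → ℝ) → ℝ) (u : ℝ × (Fin d → ℝ) → Fin d → ℝ)
    (r : ℝ × (Fin d → ℝ) → ℝ) (U : ℝ × (Fin d → ℝ) → Fin d → ℝ) (z : ℝ × (Fin d → ℝ)) : ℝ :=
  (1 / 2) * ρ z * ∑ i, (u z i - U z i) ^ 2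
    + a * ρ z ^ γ / (γ - 1) - a * r z ^ γ / (γ - 1)
    - a * γ * r z ^ (γ - 1) / (γ - 1) * (ρ z - r z)

/-- relative energy flux (with sign) -/
def relG (ε a γ : ℝ) (ρ : ℝ × (Fin d → ℝ) → ℝ) (u : ℝ × (Fin d → ℝ) → Fin d → ℝ)
    (r : ℝ × (Fin d → ℝ) → ℝ) (U : ℝ × (Fin d → ℝ) → Fin d → ℝ) (z : ℝ × (Fin d → ℝ)) :
    Fin d → ℝ := fun j =>
  U z j * (a * ρ z ^ γ - a * r z ^ γ)
    + 2 * ε * ∑ i, (ρ z * xD u z i j) * (u z i - U z i)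
    - ((1 / 2) * (ρ z * ∑ i, (u z i - U z i) * (u z i - U z i))
      + (a * γ / (γ - 1) * ρ z ^ (γ - 1) - a * γ / (γ - 1) * r z ^ (γ - 1)) * ρ z) * u z j

lemma HD.F1 {a γ : ℝ} (hγ : 1 < γ) {f : ℝ × (Fin d → ℝ) → ℝ} {f' : ℝ} {z v : ℝ × (Fin d → ℝ)}
    (hf : HD f f' z v) (h0 : 0 < f z) :
    HD (fun y => a * γ / (γ - 1) * f y ^ (γ - 1)) (a * γ * f z ^ (γ - 2) * f') z v := by
  refine ((hf.rpow (γ - 1) h0).cmul (a * γ / (γ - 1))).congr rfl ?_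
  have : γ - 1 ≠ 0 := by linarith
  rw [show γ - 1 - 1 = γ - 2 by ring]
  field_simp

section pt
variable {ε a γ : ℝ} {ρ : ℝ × (Fin d → ℝ) → ℝ} {u : ℝ × (Fin d → ℝ) → Fin d → ℝ}
    {r : ℝ × (Fin d → ℝ) → ℝ} {U : ℝ × (Fin d → ℝ) → Fin d → ℝ} {z : ℝ × (Fin d → ℝ)}

lemma HD.relE (hγ : 1 < γ)
    (hρ : Differentiable ℝ ρ) (hu : ∀ i, Differentiable ℝ fun y => u y i) (hρ0 : 0 < ρ z)
    (hr : Differentiable ℝ r) (hU : ∀ i, Differentiable ℝ fun y => U y i) (hr0 : 0 < r z)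
    (v : ℝ × (Fin d → ℝ)) :
    HD (relE a γ ρ u r U) ((1 / 2) * fderiv ℝ ρ z v * (∑ i, (u z i - U z i) * (u z i - U z i))
      + ρ z * ∑ i, (u z i - U z i) * (fderiv ℝ (fun y => u y i) z v - fderiv ℝ (fun y => U y i) z v)
      + (a * γ / (γ - 1) * ρ z ^ (γ - 1) - a * γ / (γ - 1) * r z ^ (γ - 1)) * fderiv ℝ ρ z v
      - a * γ * r z ^ (γ - 2) * fderiv ℝ r z v * (ρ z - r z)) z v := by
  have dρ := HD.of (hρ z) v
  have dr := HD.of (hr z) v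
  have dw := fun i => (HD.of (hu i z) v).sub (HD.of (hU i z) v)
  refine (((((dρ.mul (HD.sum fun i => (dw i).mul (dw i))).cmul (1 / 2)).add
    ((dρ.rpow γ hρ0).cmul (a / (γ - 1)))).sub ((dr.rpow γ hr0).cmul (a / (γ - 1)))).sub
    ((HD.F1 (a := a) hγ dr hr0).mul (dρ.sub dr))).congr ?_ ?_
  · funext y
    simp only [_root_.relE, pow_two]
    ring
  · have : ∀ i, (u z i - U z i) * (fderiv ℝ (fun y => u y i) z v - fderiv ℝ (fun y => U y i) z v)
      + (u z i - U z i) * (fderiv ℝ (fun y => u y i) z v - fderiv ℝ (fun y => U y i) z v)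
      = 2 * ((u z i - U z i) * (fderiv ℝ (fun y => u y i) z v - fderiv ℝ (fun y => U y i) z v)) :=
      fun i => by ring
    simp only [this, ← Finset.mul_sum]
    ring

lemma HD.relG (hγ : 1 < γ)
    (hρ : Differentiable ℝ ρ) (hu : ∀ i, Differentiable ℝ fun y => u y i) (hρ0 : 0 < ρ z)
    (hr : Differentiable ℝ r) (hU : ∀ i, Differentiable ℝ fun y => U y i) (hr0 : 0 < r z)
    (hS : ∀ i j, Differentiable ℝ fun y => ρ y * xD u y i j)
    (v : ℝ × (Fin d → ℝ)) (j : Fin d) :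
    HD (fun y => relG ε a γ ρ u r U y j)
      (-((1 / 2) * (∑ i, (u z i - U z i) * (u z i - U z i)) * fderiv ℝ ρ z v
          + ρ z * (∑ i, (u z i - U z i) * (fderiv ℝ (fun y => u y i) z v
              - fderiv ℝ (fun y => U y i) z v))
          + (a * γ / (γ - 1) * ρ z ^ (γ - 1) - a * γ / (γ - 1) * r z ^ (γ - 1)) * fderiv ℝ ρ z v
          + ρ z * ((a * γ * ρ z ^ (γ - 2)) * fderiv ℝ ρ z v
              - (a * γ * r z ^ (γ - 2)) * fderiv ℝ r z v)) * u z j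
        - ((1 / 2) * ρ z * (∑ i, (u z i - U z i) * (u z i - U z i))
          + (a * γ / (γ - 1) * ρ z ^ (γ - 1) - a * γ / (γ - 1) * r z ^ (γ - 1)) * ρ z)
            * fderiv ℝ (fun y => u y j) z v
        + fderiv ℝ (fun y => U y j) z v * (a * ρ z ^ γ - a * r z ^ γ)
        + U z j * (ρ z * (a * γ * ρ z ^ (γ - 2)) * fderiv ℝ ρ z v
          - r z * (a * γ * r z ^ (γ - 2)) * fderiv ℝ r z v)
        + 2 * ε * ∑ i, (fderiv ℝ (fun y => ρ y * xD u y i j) z v * (u z i - U z i)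
          + (ρ z * xD u z i j) * (fderiv ℝ (fun y => u y i) z v
              - fderiv ℝ (fun y => U y i) z v))) z v := by
  have dρ := HD.of (hρ z) v
  have dr := HD.of (hr z) v
  have dw := fun i => (HD.of (hu i z) v).sub (HD.of (hU i z) v)
  have dS := fun i => HD.of (hS i j z) v
  have dP := ((dρ.rpow γ hρ0).cmul a).sub ((dr.rpow γ hr0).cmul a)
  have e4 : ∀ s : ℝ, 0 < s → s ^ (γ - 1) = s * s ^ (γ - 2) := by
    intro s hs
    rw [rpow_step hs]; congr 2; ring
  refine ((((HD.of (hU j z) v).mul dP).add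
    ((HD.sum fun i => (dS i).mul (dw i)).cmul (2 * ε))).sub
    (((((dρ.mul (HD.sum fun i => (dw i).mul (dw i))).cmul (1 / 2))).add
      (((HD.F1 (a := a) hγ dρ hρ0).sub (HD.F1 (a := a) hγ dr hr0)).mul dρ)).mul
      (HD.of (hu j z) v))).congr rfl ?_
  have : ∀ i, (u z i - U z i) * (fderiv ℝ (fun y => u y i) z v - fderiv ℝ (fun y => U y i) z v)
      + (u z i - U z i) * (fderiv ℝ (fun y => u y i) z v - fderiv ℝ (fun y => U y i) z v)
      = 2 * ((u z i - U z i) * (fderiv ℝ (fun y => u y i) z v - fderiv ℝ (fun y => U y i) z v)) :=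
      fun i => by ring
  have h2 : ∀ i, ρ z * xD u z i j * (fderiv ℝ (fun y => u y i) z v - fderiv ℝ (fun y => U y i) z v)
      + (u z i - U z i) * fderiv ℝ (fun y => ρ y * xD u y i j) z v
      = (fderiv ℝ (fun y => ρ y * xD u y i j) z v * (u z i - U z i)
          + (ρ z * xD u z i j) * (fderiv ℝ (fun y => u y i) z v
              - fderiv ℝ (fun y => U y i) z v)) := fun i => by ring
  simp only [this, h2, ← Finset.mul_sum]
  have e5 := e4 _ hρ0
  have e6 := e4 _ hr0
  generalize ∑ i, (fderiv ℝ (fun y => ρ y * xD u y i j) z v * (u z i - U z i)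
          + (ρ z * xD u z i j) * (fderiv ℝ (fun y => u y i) z v
              - fderiv ℝ (fun y => U y i) z v)) = X
  linear_combination (U z j * a * γ * fderiv ℝ ρ z v) * e5 - (U z j * a * γ * fderiv ℝ r z v) * e6

lemma rel_energy_pt (hγ : 1 < γ)
    (hρ : Differentiable ℝ ρ) (hu : ∀ i, Differentiable ℝ fun y => u y i) (hρ0 : 0 < ρ z)
    (hr : Differentiable ℝ r) (hU : ∀ i, Differentiable ℝ fun y => U y i) (hr0 : 0 < r z)
    (hS : ∀ i j, Differentiable ℝ fun y => ρ y * xD u y i j)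
    (hm : MassEq ρ u z) (hmom : MomEq ε a γ ρ u z) (hrm : MassEq r U z)
    (hrmom : EulerMomEq a γ r U z) :
    tder (relE a γ ρ u r U) z = xdiv (relG ε a γ ρ u r U) z
      - (∑ i, ∑ j, (ρ z * (u z i - U z i) * (u z j - U z j) * xjac U z i j
          + 2 * ε * ((ρ z * xD u z i j) * (xjac u z i j - xjac U z i j))))
      - (a * ρ z ^ γ - a * r z ^ γ - r z * (a * γ * r z ^ (γ - 2)) * (ρ z - r z))
        * ∑ j, xjac U z j j := by
  have hE : ∀ i, tder (fun y => U y i) z + ∑ j, U z j * xjac U z i j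
      + a * γ * r z ^ (γ - 2) * xder i r z = 0 := by
    intro i
    have h0 : MomEq 0 a γ r U z := by
      intro i; simpa using hrmom i
    have h := mom_nc hr hU hr0 hrm h0 i
    simp only [mul_zero, zero_mul] at h
    refine (mul_eq_zero.1 ?_).resolve_left hr0.ne'
    refine Eq.trans ?_ h
    simp only [xjac]; ring
  have key := rel_energy_alg (ρ z) (r z) (tder ρ z) (tder r z) ε
    (a * γ / (γ - 1) * ρ z ^ (γ - 1)) (a * γ / (γ - 1) * r z ^ (γ - 1))
    (a * γ * ρ z ^ (γ - 2)) (a * γ * r z ^ (γ - 2)) (a * ρ z ^ γ) (a * r z ^ γ)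
    (∑ i, (u z i - U z i) * (u z i - U z i)) (fun j => xder j ρ z) (fun j => xder j r z)
    (u z) (U z) (fun i => tder (fun y => u y i) z) (fun i => tder (fun y => U y i) z)
    (fun i => u z i - U z i) (xjac u z) (xjac U z) (fun i j => ρ z * xD u z i j)
    (fun i j => xder j (fun y => ρ y * xD u y i j) z) (fun i => rfl)
    (mass_nc hρ hu hm) (mass_nc hr hU hrm) (mom_nc hρ hu hρ0 hm hmom) hE
  have h1 : tder (relE a γ ρ u r U) z = _ := (HD.relE hγ hρ hu hρ0 hr hU hr0 (1, 0)).2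
  have h2 : xdiv (relG ε a γ ρ u r U) z = _ :=
    Finset.sum_congr rfl fun j _ => (HD.relG hγ hρ hu hρ0 hr hU hr0 hS (0, Pi.single j 1) j).2
  rw [h1, h2]
  exact key

lemma rel_energy_est {L : ℝ} (ha : 0 < a) (hε : 0 < ε) (hγ : 1 < γ) (hρ0 : 0 < ρ z) (hr0 : 0 < r z)
    (hL0 : 0 ≤ L) (hL : ∀ i j, |xjac U z i j| ≤ L) :
    - (∑ i, ∑ j, (ρ z * (u z i - U z i) * (u z j - U z j) * xjac U z i j
          + 2 * ε * ((ρ z * xD u z i j) * (xjac u z i j - xjac U z i j))))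
      - (a * ρ z ^ γ - a * r z ^ γ - r z * (a * γ * r z ^ (γ - 2)) * (ρ z - r z))
        * ∑ j, xjac U z j j
    ≤ ((γ + 1) * d * L) * relE a γ ρ u r U z + (ε * (d * d * L ^ 2 / 2)) * ρ z := by
  set Fr := a * ρ z ^ γ / (γ - 1) - a * r z ^ γ / (γ - 1)
    - a * γ * r z ^ (γ - 1) / (γ - 1) * (ρ z - r z) with hFr
  have hFr0 : 0 ≤ Fr := F_rel_nonneg ha hγ hρ0 hr0
  have e4 : r z ^ (γ - 1) = r z * r z ^ (γ - 2) := by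
    rw [rpow_step hr0]; congr 2; ring
  have hg : γ - 1 ≠ 0 := by linarith
  have hp : a * ρ z ^ γ - a * r z ^ γ - r z * (a * γ * r z ^ (γ - 2)) * (ρ z - r z)
      = (γ - 1) * Fr := by
    rw [hFr, e4]; field_simp
  have hQ0 : 0 ≤ ∑ i, (u z i - U z i) ^ 2 := Finset.sum_nonneg fun i _ => sq_nonneg _
  have hE : relE a γ ρ u r U z = 1 / 2 * ρ z * (∑ i, (u z i - U z i) ^ 2) + Fr := by
    rw [hFr]; simp only [relE]; ring
  have h3 : -(∑ j, xjac U z j j) ≤ d * L := by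
    rw [← Finset.sum_neg_distrib]
    refine (Finset.sum_le_sum fun j _ => (neg_le_abs _).trans (hL j j)).trans ?_
    simp
  have h1 : -(∑ i, ∑ j, ρ z * (u z i - U z i) * (u z j - U z j) * xjac U z i j)
      ≤ ρ z * L * (d * ∑ i, (u z i - U z i) ^ 2) := by
    have e : (d : ℝ) * ∑ i, (u z i - U z i) ^ 2
        = ∑ i, ∑ j, ((u z i - U z i) ^ 2 + (u z j - U z j) ^ 2) / 2 := by
      simp only [← Finset.sum_div, Finset.sum_add_distrib, Finset.sum_const, Finset.card_univ,
        Fintype.card_fin, nsmul_eq_mul, ← Finset.mul_sum]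
      ring
    rw [e, Finset.mul_sum, ← Finset.sum_neg_distrib]
    refine Finset.sum_le_sum fun i _ => ?_
    rw [Finset.mul_sum, ← Finset.sum_neg_distrib]
    refine Finset.sum_le_sum fun j _ => ?_
    generalize u z i - U z i = x
    generalize u z j - U z j = y
    have h5 : |x * y| ≤ (x ^ 2 + y ^ 2) / 2 := by
      rw [abs_le]; constructor <;> nlinarith [sq_nonneg (x + y), sq_nonneg (x - y)]
    have h6 : -(x * y * xjac U z i j) ≤ ((x ^ 2 + y ^ 2) / 2) * L := by
      refine (neg_le_abs _).trans ?_
      rw [abs_mul]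
      exact mul_le_mul h5 (hL i j) (abs_nonneg _) (by positivity)
    have := mul_le_mul_of_nonneg_left h6 hρ0.le
    linarith
  have h2 : -(∑ i, ∑ j, xD u z i j * (xjac u z i j - xjac U z i j)) ≤ d * d * (L ^ 2 / 4) := by
    have e0 : ∑ i, ∑ j, xD u z i j * (xjac u z i j - xjac U z i j)
        = ∑ i, ∑ j, xD u z i j * (xjac u z j i - xjac U z j i) := by
      rw [Finset.sum_comm]
      refine Finset.sum_congr rfl fun i _ => Finset.sum_congr rfl fun j _ => ?_
      simp only [xD]; ring
    have e : ∑ i, ∑ j, xD u z i j * (xjac u z i j - xjac U z i j)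
        = ∑ i, ∑ j, xD u z i j * (xD u z i j - xD U z i j) := by
      have : ∑ i, ∑ j, xD u z i j * (xD u z i j - xD U z i j)
          = (∑ i, ∑ j, xD u z i j * (xjac u z i j - xjac U z i j)
            + ∑ i, ∑ j, xD u z i j * (xjac u z j i - xjac U z j i)) / 2 := by
        rw [← Finset.sum_add_distrib, Finset.sum_div]
        refine Finset.sum_congr rfl fun i _ => ?_
        rw [← Finset.sum_add_distrib, Finset.sum_div]
        refine Finset.sum_congr rfl fun j _ => ?_
        simp only [xD]; ring
      rw [this, ← e0]; ring
    rw [e]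
    have e2 : (d : ℝ) * d * (L ^ 2 / 4) = ∑ i : Fin d, ∑ j : Fin d, L ^ 2 / 4 := by
      simp only [Finset.sum_const, Finset.card_univ, Fintype.card_fin, nsmul_eq_mul]; ring
    rw [e2, ← Finset.sum_neg_distrib]
    refine Finset.sum_le_sum fun i _ => ?_
    rw [← Finset.sum_neg_distrib]
    refine Finset.sum_le_sum fun j _ => ?_
    have hb : |xD U z i j| ≤ L := by
      have h7 := abs_le.1 (hL i j)
      have h8 := abs_le.1 (hL j i)
      rw [abs_le]; simp only [xD]; constructor <;> linarith [h7.1, h7.2, h8.1, h8.2]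
    have hb2 : xD U z i j ^ 2 ≤ L ^ 2 := sq_le_sq' (abs_le.1 hb).1 (abs_le.1 hb).2
    nlinarith [sq_nonneg (2 * xD u z i j - xD U z i j)]
  have hsplit : ∑ i, ∑ j, (ρ z * (u z i - U z i) * (u z j - U z j) * xjac U z i j
          + 2 * ε * ((ρ z * xD u z i j) * (xjac u z i j - xjac U z i j)))
      = (∑ i, ∑ j, ρ z * (u z i - U z i) * (u z j - U z j) * xjac U z i j)
        + 2 * ε * ρ z * (∑ i, ∑ j, xD u z i j * (xjac u z i j - xjac U z i j)) := by
    simp only [Finset.sum_add_distrib, Finset.mul_sum]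
    congr 1
    refine Finset.sum_congr rfl fun i _ => Finset.sum_congr rfl fun j _ => ?_
    ring
  rw [hsplit, hp, hE]
  have g2 := mul_le_mul_of_nonneg_left h2 (by positivity : 0 ≤ 2 * ε * ρ z)
  have g3 := mul_le_mul_of_nonneg_left h3 (mul_nonneg (by linarith : 0 ≤ γ - 1) hFr0)
  have hdL : 0 ≤ (d : ℝ) * L := by positivity
  have g4 : 0 ≤ d * L * Fr := mul_nonneg hdL hFr0
  have g5 : 0 ≤ (γ - 1) * (d * L * (1 / 2 * ρ z * (∑ i, (u z i - U z i) ^ 2))) :=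
    mul_nonneg (by linarith) (by positivity)
  linarith
end pt

lemma contDiff_xder {f : ℝ × (Fin d → ℝ) → ℝ} (hf : ContDiff ℝ (⊤ : ℕ∞) f) (j : Fin d) :
    ContDiff ℝ (⊤ : ℕ∞) (xder j f) := contDiff_dir (n := ⊤) (by simpa using hf) _

lemma contDiff_xD {u : ℝ × (Fin d → ℝ) → Fin d → ℝ} (hu : ContDiff ℝ (⊤ : ℕ∞) u) (i j : Fin d) :
    ContDiff ℝ (⊤ : ℕ∞) (fun z => xD u z i j) := by
  have h := fun i => contDiff_pi.1 hu i
  exact ((contDiff_xder (h i) j).add (contDiff_xder (h j) i)).div_const 2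

lemma periodic_xder {f : ℝ × (Fin d → ℝ) → ℝ} (hf : PeriodicX f) (j : Fin d) :
    PeriodicX (xder j f) := by
  intro t x k
  have h : (fun z => f (z + (0, fun i => (k i : ℝ)))) = f := by
    funext z
    obtain ⟨s, y⟩ := z
    simpa using hf s y k
  have h2 := fderiv_comp_add_right (𝕜 := ℝ) (f := f) (x := (t, x)) ((0 : ℝ), fun i => (k i : ℝ))
  rw [h] at h2
  simp only [xder]
  rw [h2]
  simp

lemma energy_bound {T ε a γ L : ℝ} {ρ : ℝ × (Fin d → ℝ) → ℝ} {u : ℝ × (Fin d → ℝ) → Fin d → ℝ}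
    {r : ℝ × (Fin d → ℝ) → ℝ} {U : ℝ × (Fin d → ℝ) → Fin d → ℝ} (hd : 1 ≤ d)
    (hε : 0 < ε) (ha : 0 < a) (hγ : 1 < γ)
    (hr : ContDiff ℝ (⊤ : ℕ∞) r) (hU : ContDiff ℝ (⊤ : ℕ∞) U)
    (hrper : PeriodicX r) (hUper : ∀ i, PeriodicX fun z => U z i) (hr0 : ∀ z, 0 < r z)
    (hrmass : ∀ t ∈ Set.Icc 0 T, ∀ x : Fin d → ℝ, MassEq r U (t, x))
    (hrmom : ∀ t ∈ Set.Icc 0 T, ∀ x : Fin d → ℝ, EulerMomEq a γ r U (t, x))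
    (hρ : ContDiff ℝ (⊤ : ℕ∞) ρ) (hu : ContDiff ℝ (⊤ : ℕ∞) u)
    (hρper : PeriodicX ρ) (huper : ∀ i, PeriodicX fun z => u z i) (hρ0 : ∀ z, 0 < ρ z)
    (hmass : ∀ t ∈ Set.Icc 0 T, ∀ x : Fin d → ℝ, MassEq ρ u (t, x))
    (hmom : ∀ t ∈ Set.Icc 0 T, ∀ x : Fin d → ℝ, MomEq ε a γ ρ u (t, x))
    (hinit : ∀ x : Fin d → ℝ, ρ (0, x) = r (0, x) ∧ u (0, x) = U (0, x))
    (hL0 : 0 ≤ L) (hL : ∀ t ∈ Set.Icc 0 T, ∀ x ∈ box d, ∀ i j, |xjac U (t, x) i j| ≤ L)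
    (t : ℝ) (ht : t ∈ Set.Icc 0 T) :
    ∫ x in box d, relE a γ ρ u r U (t, x)
      ≤ (ε * (d * d * L ^ 2 / 2) * ∫ x in box d, r (0, x)) * T
        * Real.exp (((γ + 1) * d * L) * T) := by
  have top1 : (1 : WithTop ℕ∞) ≤ ((⊤ : ℕ∞) : WithTop ℕ∞) := by exact_mod_cast le_top
  have hui := fun i => contDiff_pi.1 hu i
  have hUi := fun i => contDiff_pi.1 hU i
  have hρ1 := hρ.of_le top1
  have hr1 := hr.of_le top1
  have hui1 := fun i => (hui i).of_le top1
  have hUi1 := fun i => (hUi i).of_le top1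
  have hS : ∀ i j, ContDiff ℝ (⊤ : ℕ∞) fun y => ρ y * xD u y i j :=
    fun i j => hρ.mul (contDiff_xD hu i j)
  have hS1 := fun i j => (hS i j).of_le top1
  have hpρ : ∀ p : ℝ, ContDiff ℝ 1 fun z => ρ z ^ p :=
    fun p => hρ1.rpow_const_of_ne fun z => (hρ0 z).ne'
  have hpr : ∀ p : ℝ, ContDiff ℝ 1 fun z => r z ^ p :=
    fun p => hr1.rpow_const_of_ne fun z => (hr0 z).ne'
  have hE1 : ContDiff ℝ 1 (relE a γ ρ u r U) := by
    have h1 := hpρ γ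
    have h2 := hpr γ
    have h3 := hpr (γ - 1)
    have h4 : ContDiff ℝ 1 fun z => ∑ i, (u z i - U z i) ^ 2 :=
      ContDiff.sum fun i _ => ((hui1 i).sub (hUi1 i)).pow 2
    unfold relE
    exact ((((contDiff_const.mul hρ1).mul h4).add ((contDiff_const.mul h1).div_const _)).sub
      ((contDiff_const.mul h2).div_const _)).sub
      (((contDiff_const.mul h3).div_const _).mul (hρ1.sub hr1))
  have hG1 : ∀ j, ContDiff ℝ 1 (fun z => relG ε a γ ρ u r U z j) := by
    intro j
    have h4 : ContDiff ℝ 1 fun z => ∑ i, (u z i - U z i) * (u z i - U z i) :=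
      ContDiff.sum fun i _ => ((hui1 i).sub (hUi1 i)).mul ((hui1 i).sub (hUi1 i))
    have h5 : ContDiff ℝ 1 fun z => ∑ i, (ρ z * xD u z i j) * (u z i - U z i) :=
      ContDiff.sum fun i _ => (hS1 i j).mul ((hui1 i).sub (hUi1 i))
    unfold relG
    exact (((hUi1 j).mul ((contDiff_const.mul (hpρ γ)).sub (contDiff_const.mul (hpr γ)))).add
      (contDiff_const.mul h5)).sub (((contDiff_const.mul (hρ1.mul h4)).add
        (((contDiff_const.mul (hpρ (γ - 1))).sub (contDiff_const.mul (hpr (γ - 1)))).mul hρ1)).mul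
        (hui1 j))
  have hDper : ∀ i j, PeriodicX (fun z => xD u z i j) := by
    intro i j t x k
    have h1 := periodic_xder (huper i) j t x k
    have h2 := periodic_xder (huper j) i t x k
    simp only [xD, xjac, h1, h2]
  have hGper : ∀ j, PeriodicX (fun z => relG ε a γ ρ u r U z j) := by
    intro j t x k
    have h1 := hρper t x k
    have h2 := hrper t x k
    have h3 := fun i => huper i t x k
    have h4 := fun i => hUper i t x k
    have h5 := fun i j => hDper i j t x k
    simp only at h3 h4 h5
    simp only [relG, h1, h2, h3, h4, h5]
  have hd1 : ∀ {f : ℝ × (Fin d → ℝ) → ℝ}, ContDiff ℝ 1 f → Differentiable ℝ f :=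
    fun h => h.differentiable one_ne_zero
  -- mass conservation
  have hmc : ∀ s ∈ Set.Icc 0 T, ∫ x in box d, ρ (s, x) = ∫ x in box d, r (0, x) := by
    intro s hs
    have hM := constant_of_has_deriv_right_zero (f := fun s => ∫ x in box d, ρ (s, x))
      (a := 0) (b := T) (fun s _ => (hasDerivAt_int hρ1 s).continuousAt.continuousWithinAt) (by
        intro s hs
        have h1 := hasDerivAt_int hρ1 s
        have h2 : ∫ x in box d, tder ρ (s, x) = 0 := by
          have h3 := int_xdiv_zero (G := fun y j => ρ y * u y j) hd
            (fun i => hρ1.mul (hui1 i)) (by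
              intro i t x k
              have h1 := hρper t x k
              have h3 := huper i t x k
              simp only at h3
              simp only [h1, h3]) s
          have h4 : ∀ x, tder ρ (s, x) = -xdiv (fun y j => ρ y * u y j) (s, x) := by
            intro x
            have := hmass s ⟨hs.1, hs.2.le⟩ x
            unfold MassEq at this
            linarith
          simp only [h4]
          rw [integral_neg, h3, neg_zero]
        rw [h2] at h1
        exact h1.hasDerivWithinAt) s hs
    simp only [fun x => (hinit x).1] at hM
    exact hM
  have hm0 : 0 ≤ ∫ x in box d, r (0, x) := integral_nonneg fun x => (hr0 _).le
  refine gronwall_simple (E := fun t => ∫ x in box d, relE a γ ρ u r U (t, x))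
    (E' := fun t => ∫ x in box d, tder (relE a γ ρ u r U) (t, x))
    (by have : 0 ≤ γ + 1 := by linarith
        positivity) (by positivity) (fun s => hasDerivAt_int hE1 s) ?_ ?_ t ht
  · have : ∀ x, relE a γ ρ u r U (0, x) = 0 := by
      intro x
      simp [relE, (hinit x).1, (hinit x).2]
    simp [this]
  · intro s hs
    have hGc : Continuous (xdiv (relG ε a γ ρ u r U)) := by
      unfold xdiv
      exact continuous_finsetSum _ fun i _ => continuous_dir (hG1 i) _
    have hEc : Continuous (tder (relE a γ ρ u r U)) := continuous_dir hE1 _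
    have hi1 := intOn_slice hEc s
    have hi2 := intOn_slice hGc s
    have hi3 := intOn_slice hE1.continuous s
    have hi4 := intOn_slice hρ1.continuous s
    have e1 : ∫ x in box d, tder (relE a γ ρ u r U) (s, x)
        = ∫ x in box d, (tder (relE a γ ρ u r U) (s, x) - xdiv (relG ε a γ ρ u r U) (s, x)) := by
      rw [integral_sub hi1 hi2, int_xdiv_zero hd hG1 hGper, sub_zero]
    have e2 : (γ + 1) * d * L * (∫ x in box d, relE a γ ρ u r U (s, x))
          + ε * (d * d * L ^ 2 / 2) * ∫ x in box d, r (0, x)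
        = ∫ x in box d, ((γ + 1) * d * L * relE a γ ρ u r U (s, x)
          + ε * (d * d * L ^ 2 / 2) * ρ (s, x)) := by
      rw [integral_add (hi3.const_mul _) (hi4.const_mul _), integral_const_mul,
        integral_const_mul, hmc s hs]
    show ∫ x in box d, tder (relE a γ ρ u r U) (s, x) ≤ _
    rw [e1, e2]
    refine setIntegral_mono_on (hi1.sub hi2) ((hi3.const_mul _).add (hi4.const_mul _))
      (isCompact_box d).measurableSet fun x hx => ?_
    have h1 := rel_energy_pt (z := (s, x)) hγ (hd1 hρ1) (fun i => hd1 (hui1 i)) (hρ0 _) (hd1 hr1)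
      (fun i => hd1 (hUi1 i)) (hr0 _) (fun i j => hd1 (hS1 i j)) (hmass s hs x) (hmom s hs x)
      (hrmass s hs x) (hrmom s hs x)
    have h2 := rel_energy_est (ρ := ρ) (u := u) (r := r) (U := U) (z := (s, x)) ha hε hγ
      (hρ0 _) (hr0 _) hL0 (hL s hs x hx)
    rw [h1]
    linarith

/-- Inviscid limit in relative energy: if `(r,U)` is a smooth,
periodic, uniformly positive solution of compressible Euler and, for each
`ε ∈ (0,1]`, `(ρ_ε, u_ε)` is a smooth periodic positive solution of the
compressible Navier–Stokes system with viscosity `ε` and the same initial data,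
then `sup_{t∈[0,T]} ∫ [½ρ_ε|u_ε − U|² + F(ρ_ε) − F(r) − F′(r)(ρ_ε − r)] → 0`
as `ε → 0⁺`, where `F(s) = a s^γ/(γ−1)`. -/
theorem inviscid_limit_relative_energy
    {d : ℕ} (hd : 1 ≤ d) (a γ T : ℝ)
    (ha : 0 < a) (hγ : 1 < γ) (hT : 0 ≤ T)
    (r : ℝ × (Fin d → ℝ) → ℝ) (U : ℝ × (Fin d → ℝ) → Fin d → ℝ)
    (hr : ContDiff ℝ (⊤ : ℕ∞) r) (hU : ContDiff ℝ (⊤ : ℕ∞) U)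
    (hrper : PeriodicX r) (hUper : ∀ i, PeriodicX fun z => U z i)
    (c : ℝ) (hc : 0 < c) (hrlb : ∀ z, c ≤ r z)
    (hrmass : ∀ t ∈ Set.Icc 0 T, ∀ x : Fin d → ℝ, MassEq r U (t, x))
    (hrmom : ∀ t ∈ Set.Icc 0 T, ∀ x : Fin d → ℝ, EulerMomEq a γ r U (t, x))
    (ρ : ℝ → ℝ × (Fin d → ℝ) → ℝ) (u : ℝ → ℝ × (Fin d → ℝ) → Fin d → ℝ)
    (hρ : ∀ ε ∈ Set.Ioc (0 : ℝ) 1, ContDiff ℝ (⊤ : ℕ∞) (ρ ε))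
    (hu : ∀ ε ∈ Set.Ioc (0 : ℝ) 1, ContDiff ℝ (⊤ : ℕ∞) (u ε))
    (hρper : ∀ ε ∈ Set.Ioc (0 : ℝ) 1, PeriodicX (ρ ε))
    (huper : ∀ ε ∈ Set.Ioc (0 : ℝ) 1, ∀ i, PeriodicX fun z => u ε z i)
    (hρpos : ∀ ε ∈ Set.Ioc (0 : ℝ) 1, ∀ z, 0 < ρ ε z)
    (hmass : ∀ ε ∈ Set.Ioc (0 : ℝ) 1, ∀ t ∈ Set.Icc 0 T, ∀ x : Fin d → ℝ,
      MassEq (ρ ε) (u ε) (t, x))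
    (hmom : ∀ ε ∈ Set.Ioc (0 : ℝ) 1, ∀ t ∈ Set.Icc 0 T, ∀ x : Fin d → ℝ,
      MomEq ε a γ (ρ ε) (u ε) (t, x))
    (hinit : ∀ ε ∈ Set.Ioc (0 : ℝ) 1, ∀ x : Fin d → ℝ,
      ρ ε (0, x) = r (0, x) ∧ u ε (0, x) = U (0, x)) :
    Filter.Tendsto
      (fun ε : ℝ => ⨆ t ∈ Set.Icc (0 : ℝ) T,
        ∫ x in box d,
          ((1 / 2) * ρ ε (t, x) * ∑ i, (u ε (t, x) i - U (t, x) i) ^ 2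
            + a * ρ ε (t, x) ^ γ / (γ - 1) - a * r (t, x) ^ γ / (γ - 1)
            - deriv (fun q : ℝ => a * q ^ γ / (γ - 1)) (r (t, x)) * (ρ ε (t, x) - r (t, x))))
      (nhdsWithin 0 (Set.Ioc 0 1)) (nhds 0) := by

  have hr0 : ∀ z, 0 < r z := fun z => hc.trans_le (hrlb z)
  have hUi := fun i => contDiff_pi.1 hU i
  -- bound on the gradient of `U`
  obtain ⟨L, hL0, hL⟩ : ∃ L : ℝ, 0 ≤ L ∧ ∀ t ∈ Set.Icc 0 T, ∀ x ∈ box d, ∀ i j,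
      |xjac U (t, x) i j| ≤ L := by
    have hcont : Continuous (xjac U) :=
      continuous_pi fun i => continuous_pi fun j => (contDiff_xder (hUi i) j).continuous
    obtain ⟨B, hB⟩ := ((isCompact_Icc (a := (0 : ℝ)) (b := T)).prod
      (isCompact_box d)).exists_bound_of_continuousOn hcont.continuousOn
    refine ⟨max B 0, le_max_right _ _, fun t ht x hx i j => ?_⟩
    refine le_trans ?_ ((hB (t, x) ⟨ht, hx⟩).trans (le_max_left _ _))
    exact (norm_le_pi_norm (xjac U (t, x) i) j).trans (norm_le_pi_norm (xjac U (t, x)) i)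
  have hderiv : ∀ q : ℝ, 0 < q → deriv (fun q : ℝ => a * q ^ γ / (γ - 1)) q
      = a * γ * q ^ (γ - 1) / (γ - 1) := by
    intro q hq
    have h := ((Real.hasDerivAt_rpow_const (x := q) (p := γ) (Or.inl hq.ne')).const_mul a).div_const
      (γ - 1)
    rw [h.deriv]; ring
  have hrw : ∀ ε t x, ((1 / 2) * ρ ε (t, x) * ∑ i, (u ε (t, x) i - U (t, x) i) ^ 2
            + a * ρ ε (t, x) ^ γ / (γ - 1) - a * r (t, x) ^ γ / (γ - 1)
            - deriv (fun q : ℝ => a * q ^ γ / (γ - 1)) (r (t, x)) * (ρ ε (t, x) - r (t, x)))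
      = relE a γ (ρ ε) (u ε) r U (t, x) := by
    intro ε t x
    rw [hderiv _ (hr0 _)]; rfl
  simp only [hrw]
  set C := ((d * d * L ^ 2 / 2) * ∫ x in box d, r (0, x)) * T
        * Real.exp (((γ + 1) * d * L) * T) with hC
  have hC0 : 0 ≤ C := by
    have hm0 : 0 ≤ ∫ x in box d, r (0, x) := integral_nonneg fun x => (hr0 _).le
    positivity
  have hlim : Filter.Tendsto (fun ε : ℝ => ε * C) (nhdsWithin 0 (Set.Ioc 0 1)) (nhds 0) := by
    have : Filter.Tendsto (fun ε : ℝ => ε * C) (nhds 0) (nhds (0 * C)) :=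
      (continuous_id.mul continuous_const).tendsto 0
    rw [zero_mul] at this
    exact this.mono_left nhdsWithin_le_nhds
  refine tendsto_of_tendsto_of_tendsto_of_le_of_le' tendsto_const_nhds hlim ?_ ?_
  · filter_upwards [self_mem_nhdsWithin] with ε hε
    refine Real.iSup_nonneg fun t => Real.iSup_nonneg fun _ => integral_nonneg fun x => ?_
    have h1 := F_rel_nonneg ha hγ (hρpos ε hε (t, x)) (hr0 (t, x))
    have h2 : 0 ≤ (1 / 2) * ρ ε (t, x) * ∑ i, (u ε (t, x) i - U (t, x) i) ^ 2 :=
      mul_nonneg (mul_nonneg (by norm_num) (hρpos ε hε _).le)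
        (Finset.sum_nonneg fun i _ => sq_nonneg _)
    simp only [relE, Pi.zero_apply]
    linarith
  · filter_upwards [self_mem_nhdsWithin] with ε hε
    have hεC : 0 ≤ ε * C := mul_nonneg hε.1.le hC0
    refine Real.iSup_le (fun t => Real.iSup_le (fun ht => ?_) hεC) hεC
    have h := energy_bound hd hε.1 ha hγ hr hU hrper hUper hr0 hrmass hrmom (hρ ε hε) (hu ε hε)
      (hρper ε hε) (huper ε hε) (hρpos ε hε) (hmass ε hε) (hmom ε hε) (hinit ε hε) hL0 hL t ht
    refine h.trans (le_of_eq ?_)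
    rw [hC]; ring
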